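/- (Negative answer to Cusick's conjecture) There exists a real number x with x > √12 such that x ∈ M and x ∉ L; that is, (M ∖ L) ∩ (√12, ∞) ≠ ∅. -/

import Mathlib

open scoped ENNReal

/-- The distance from a real number to the nearest integer. -/
noncomputable def distNearestInt (x : ℝ) : ℝ := |x - round x|

/-- The best constant of Diophantine approximation of `α`,
`ℓ(α) = limsup_{q → ∞} 1 / (q ⬝ ‖q α‖) ∈ [0, ∞]`. -/
noncomputable def lagrangeVal (α : ℝ) : ℝ≥0∞ :=
  Filter.limsup (fun q : ℕ => ENNReal.ofReal (1 / (q * distNearestInt (q * α)))) Filter.atTop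

/-- The Lagrange spectrum: the set of finite values `ℓ(α)` over irrational `α`. -/
def LagrangeSpectrum : Set ℝ :=
  {t | ∃ α : ℝ, Irrational α ∧ lagrangeVal α ≠ ⊤ ∧ (lagrangeVal α).toReal = t}

/-- The best constant of Diophantine approximation of the binary quadratic form
`h(x,y) = a x² + b x y + c y²`, namely `m(h) = sup_{(p,q) ≠ (0,0)} √Δ(h) / |h(p,q)| ∈ (0, ∞]`. -/
noncomputable def markovVal (a b c : ℝ) : ℝ≥0∞ :=
  ⨆ (pq : ℤ × ℤ) (_ : pq ≠ (0, 0)),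
    ENNReal.ofReal (Real.sqrt (b ^ 2 - 4 * a * c)) /
      ENNReal.ofReal |a * (pq.1 : ℝ) ^ 2 + b * pq.1 * pq.2 + c * (pq.2 : ℝ) ^ 2|

/-- The Markov spectrum: the set of finite values `m(h)` over real indefinite binary
quadratic forms `h` with positive discriminant. -/
def MarkovSpectrum : Set ℝ :=
  {t | ∃ a b c : ℝ, 0 < b ^ 2 - 4 * a * c ∧ markovVal a b c ≠ ⊤ ∧ (markovVal a b c).toReal = t}

/-! Let `λₙ = aₙ + [0; aₙ₊₁, aₙ₊₂, …] + [0; aₙ₋₁, aₙ₋₂, …]`. By Perron's formulas, the Markov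
spectrum consists of the suprema of `λₙ` over two-sided sequences, and the Lagrange spectrum of the
limits superior over one-sided ones. Suppose that `λₙ < gapHigh` for all `n`. A finite search shows
that `λₙ > gapLow` forces the nearby letters to be those of the periodic word `perWord` or of its
mirror image; another one shows that the periodic pattern then extends by a whole period to the left
(the mirrored one to the right), hence forever, and `λ < gapLow` wherever it has settled. Among
three distant positions with `λ > gapLow`, the middle one therefore contradicts one of the other
two, so no limit superior lies between `gapLow` and `gapHigh`. A two-sided sequence may have one
such position: `markovWord` is periodic to the left of it, and ends in `2, 1, 2, 1, …`. -/

namespace Cusick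

open Filter Set Topology

variable {a : ℤ → ℕ} {u v : ℤ → ℝ}

/-- The `n`-th step of a continued fraction with partial quotients `a`, possibly infinite in both
directions: `u n` stands for `[0; a n, a (n + 1), …]` and `v n` for `[0; a (n - 1), a (n - 2), …]`.
On a half-line `N ≤ n` the initial value `v N` is free, so one-sided expansions are covered. -/
structure CFStep (a : ℤ → ℕ) (u v : ℤ → ℝ) (n : ℤ) : Prop where
  one_le : 1 ≤ a n
  fwd_nonneg : 0 ≤ u (n + 1)
  bwd_nonneg : 0 ≤ v n
  fwd : u n = (a n + u (n + 1))⁻¹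
  bwd : v (n + 1) = (a n + v n)⁻¹

/-- Perron's `λₙ = aₙ + [0; aₙ₊₁, aₙ₊₂, …] + [0; aₙ₋₁, aₙ₋₂, …]`. -/
def cfValue (a : ℤ → ℕ) (u v : ℤ → ℝ) (n : ℤ) : ℝ := a n + u (n + 1) + v n

namespace CFStep

variable {n : ℤ}

lemma one_le_cast (h : CFStep a u v n) : (1 : ℝ) ≤ a n := mod_cast h.one_le

lemma fwd_pos (h : CFStep a u v n) : 0 < u n := by
  rw [h.fwd]
  exact inv_pos.2 (by linarith [h.one_le_cast, h.fwd_nonneg])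

lemma fwd_le_one (h : CFStep a u v n) : u n ≤ 1 := by
  rw [h.fwd]
  exact inv_le_one_of_one_le₀ (by linarith [h.one_le_cast, h.fwd_nonneg])

lemma bwd_pos (h : CFStep a u v n) : 0 < v (n + 1) := by
  rw [h.bwd]
  exact inv_pos.2 (by linarith [h.one_le_cast, h.bwd_nonneg])

lemma mirror (h : CFStep a u v (-n - 1)) :
    CFStep (fun i => a (-i - 1)) (fun i => v (-i)) (fun i => u (-i)) n where
  one_le := h.one_le
  fwd_nonneg := by simpa only [neg_add'] using h.bwd_nonneg
  bwd_nonneg := by simpa only [sub_add_cancel] using h.fwd_nonneg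
  fwd := by simpa only [neg_add', sub_add_cancel] using h.bwd
  bwd := by simpa only [neg_add', sub_add_cancel] using h.fwd

end CFStep

lemma cfValue_mirror (a : ℤ → ℕ) (u v : ℤ → ℝ) (n : ℤ) :
    cfValue (fun i => a (-i - 1)) (fun i => v (-i)) (fun i => u (-i)) n
      = cfValue a u v (-n - 1) := by
  simp only [cfValue, neg_add', sub_add_cancel]
  ring

/-! ### The quadratic form of a continued fraction step -/

/-- The binary quadratic form of discriminant `1` with roots `p / q = 1 / u` and `p / q = -v`. -/
noncomputable def rootForm (u v p q : ℝ) : ℝ := (u * p - q) * (p + v * q) / (1 + u * v)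

lemma rootForm_neg_neg (u v p q : ℝ) : rootForm u v (-p) (-q) = rootForm u v p q := by
  rw [rootForm, rootForm]
  ring

lemma rootForm_neg_right (u v p q : ℝ) : rootForm u v p (-q) = -rootForm v u q p := by
  rw [rootForm, rootForm]
  ring

namespace CFStep

variable {n : ℤ}

lemma cfValue_pos (h : CFStep a u v n) : 0 < cfValue a u v n := by
  rw [cfValue]
  linarith [h.one_le_cast, h.fwd_nonneg, h.bwd_nonneg]

lemma rootForm_succ (h : CFStep a u v n) (p q : ℝ) :
    rootForm (u (n + 1)) (v (n + 1)) p q = -rootForm (u n) (v n) (a n * p + q) p := by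
  have hfwd : a n + u (n + 1) ≠ 0 := by linarith [h.one_le_cast, h.fwd_nonneg]
  have hbwd : a n + v n ≠ 0 := by linarith [h.one_le_cast, h.bwd_nonneg]
  have hvalue : a n + u (n + 1) + v n ≠ 0 := h.cfValue_pos.ne'
  have hvalue' : a n + v n + u (n + 1) ≠ 0 := by rwa [add_right_comm]
  rw [rootForm, rootForm, h.fwd, h.bwd]
  field_simp
  ring

lemma rootForm_one_zero (h : CFStep a u v n) :
    rootForm (u n) (v n) 1 0 = (cfValue a u v n)⁻¹ := by
  have hfwd : a n + u (n + 1) ≠ 0 := by linarith [h.one_le_cast, h.fwd_nonneg]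
  have hvalue : a n + u (n + 1) + v n ≠ 0 := h.cfValue_pos.ne'
  rw [rootForm, cfValue, h.fwd]
  field_simp
  ring

lemma rootForm_zero_one (h : CFStep a u v n) :
    rootForm (u (n + 1)) (v (n + 1)) 0 1 = -(cfValue a u v n)⁻¹ := by
  rw [h.rootForm_succ, ← h.rootForm_one_zero, mul_zero, zero_add]

end CFStep

/-- On the segment `0 ≤ p ≤ a n * q` the form is `q ^ 2` times a convex function of `p / q`. -/
lemma le_neg_rootForm {n : ℤ} {δ p q : ℝ} (h : ∀ i ∈ Icc n (n + 2), CFStep a u v i)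
    (hδ : ∀ i ∈ Icc n (n + 2), δ ≤ (cfValue a u v i)⁻¹) (hp : 0 ≤ p) (hpq : p ≤ a (n + 1) * q) :
    δ * q ^ 2 ≤ -rootForm (u (n + 1)) (v (n + 1)) p q := by
  have h₁ := h (n + 1) (by grind)
  have ha := h₁.one_le_cast
  have hu := h₁.fwd_pos
  have hv := (h n (by grind)).bwd_pos
  have hleft : δ ≤ -rootForm (u (n + 1)) (v (n + 1)) 0 1 := by
    rw [(h n (by grind)).rootForm_zero_one, neg_neg]
    exact hδ n (by grind)
  have hright : δ ≤ -rootForm (u (n + 1)) (v (n + 1)) (a (n + 1)) 1 := by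
    have := h₁.rootForm_succ 1 0
    rw [mul_one, add_zero, (h (n + 1 + 1) (by grind)).rootForm_one_zero] at this
    exact this ▸ hδ _ (by grind)
  have hq : 0 ≤ q := by by_contra! hq; nlinarith
  have hconvex : -rootForm (u (n + 1)) (v (n + 1)) p q * a (n + 1) =
      q * (a (n + 1) * q - p) * -rootForm (u (n + 1)) (v (n + 1)) 0 1
      + q * p * -rootForm (u (n + 1)) (v (n + 1)) (a (n + 1)) 1
      + a (n + 1) * (p * (a (n + 1) * q - p) * u (n + 1) / (1 + u (n + 1) * v (n + 1))) := by
    simp only [rootForm]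
    field_simp
    ring
  have hpq' := sub_nonneg.2 hpq
  have h₂ := mul_le_mul_of_nonneg_left hleft (mul_nonneg hq hpq')
  have h₃ := mul_le_mul_of_nonneg_left hright (mul_nonneg hq hp)
  have h₄ : 0 ≤ a (n + 1) *
      (p * (a (n + 1) * q - p) * u (n + 1) / (1 + u (n + 1) * v (n + 1))) := by positivity
  refine le_of_mul_le_mul_right ?_ (by linarith : (0 : ℝ) < a (n + 1))
  linarith

theorem le_abs_rootForm {n : ℤ} {δ : ℝ} (h : ∀ i ≥ n, CFStep a u v i)
    (hδ : ∀ i ≥ n, δ ≤ (cfValue a u v i)⁻¹) {p q : ℕ} (hpq : 0 < p + q) :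
    δ ≤ |rootForm (u (n + 1)) (v (n + 1)) p q| := by
  obtain hneg | hpos := le_total δ 0
  · exact hneg.trans (abs_nonneg _)
  induction hsum : p + q using Nat.strong_induction_on generalizing n p q with | _ s ih
  obtain rfl | hq := q.eq_zero_or_pos
  · have hp : (1 : ℝ) ≤ p := mod_cast hpq
    have hscale : rootForm (u (n + 1)) (v (n + 1)) p 0 = p ^ 2 * (cfValue a u v (n + 1))⁻¹ := by
      rw [← (h (n + 1) (by grind)).rootForm_one_zero, rootForm, rootForm]
      ring
    rw [Nat.cast_zero, hscale]
    have := hδ (n + 1) (by grind)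
    exact le_abs.2 <| .inl <| this.trans <|
      le_mul_of_one_le_left (hpos.trans this) (one_le_pow₀ hp)
  obtain hge | hle := le_total (a (n + 1) * q) p
  · obtain ⟨r, rfl⟩ := Nat.exists_eq_add_of_le hge
    have := Nat.mul_le_mul_right q (h (n + 1) (by grind)).one_le
    have hstep := ih (q + r) (by lia) (n := n + 1) (p := q) (q := r) (fun i hi => h i (by grind))
      (fun i hi => hδ i (by grind)) (by lia) rfl
    rw [(h (n + 1) (by grind)).rootForm_succ, abs_neg] at hstep
    push_cast
    exact hstep
  · have hq' : (1 : ℝ) ≤ q := mod_cast hq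
    have := le_neg_rootForm (fun i hi => h i hi.1) (fun i hi => hδ i hi.1) p.cast_nonneg
      (mod_cast hle : (p : ℝ) ≤ a (n + 1) * q)
    exact le_abs.2 (.inr ((le_mul_of_one_le_right hpos (one_le_pow₀ hq')).trans this))

/-! ### Perron's formula for the Markov spectrum -/

theorem le_abs_rootForm_of_ne_zero {δ : ℝ} (h : ∀ n, CFStep a u v n)
    (hδ : ∀ n, δ ≤ (cfValue a u v n)⁻¹) {p q : ℤ} (hpq : (p, q) ≠ (0, 0)) :
    δ ≤ |rootForm (u 0) (v 0) p q| := by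
  wlog hp : 0 ≤ p generalizing p q
  · rw [← rootForm_neg_neg]
    exact mod_cast this (p := -p) (q := -q) (by simpa using hpq) (by lia)
  lift p to ℕ using hp
  obtain hq | hq := le_total 0 q
  · lift q to ℕ using hq
    exact le_abs_rootForm (n := -1) (fun i _ => h i) (fun i _ => hδ i) (p := p) (q := q) (by grind)
  · obtain ⟨q, rfl⟩ := Int.exists_eq_neg_ofNat hq
    push_cast
    rw [rootForm_neg_right, abs_neg]
    refine le_abs_rootForm (n := -1) (u := fun i => v (-i)) (v := fun i => u (-i))
      (fun i _ => (h (-i - 1)).mirror) (fun i _ => ?_) (by grind)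
    rw [cfValue_mirror]
    exact hδ _

lemma discr_rootForm {u v : ℝ} (h : 1 + u * v ≠ 0) :
    ((u * v - 1) / (1 + u * v)) ^ 2 - 4 * (u / (1 + u * v)) * (-v / (1 + u * v)) = 1 := by
  field_simp
  ring

lemma markovVal_eq_iSup_rootForm {u v : ℝ} (h : 1 + u * v ≠ 0) :
    markovVal (u / (1 + u * v)) ((u * v - 1) / (1 + u * v)) (-v / (1 + u * v)) =
      ⨆ (pq : ℤ × ℤ) (_ : pq ≠ (0, 0)), (ENNReal.ofReal |rootForm u v pq.1 pq.2|)⁻¹ := by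
  have hform (p q : ℝ) : u / (1 + u * v) * p ^ 2 + (u * v - 1) / (1 + u * v) * p * q
      + -v / (1 + u * v) * q ^ 2 = rootForm u v p q := by
    rw [rootForm]
    ring
  simp only [markovVal, discr_rootForm h, hform, Real.sqrt_one, ENNReal.ofReal_one, one_div]

theorem cfValue_zero_mem_markovSpectrum (h : ∀ n, CFStep a u v n)
    (hmax : ∀ n, cfValue a u v n ≤ cfValue a u v 0) : cfValue a u v 0 ∈ MarkovSpectrum := by
  have hne : 1 + u 0 * v 0 ≠ 0 := by
    linarith [mul_nonneg (h 0).fwd_pos.le (h 0).bwd_nonneg]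
  have hmin (n : ℤ) : (cfValue a u v 0)⁻¹ ≤ (cfValue a u v n)⁻¹ :=
    inv_anti₀ (h n).cfValue_pos (hmax n)
  have hval : markovVal (u 0 / (1 + u 0 * v 0)) ((u 0 * v 0 - 1) / (1 + u 0 * v 0))
      (-v 0 / (1 + u 0 * v 0)) = ENNReal.ofReal (cfValue a u v 0) := by
    rw [markovVal_eq_iSup_rootForm hne, ← inv_inv (cfValue a u v 0),
      ENNReal.ofReal_inv_of_pos (inv_pos.2 (h 0).cfValue_pos)]
    refine le_antisymm (iSup₂_le fun pq hpq => ?_) (le_iSup₂_of_le (1, 0) (by simp) ?_)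
    · exact ENNReal.inv_le_inv' (ENNReal.ofReal_le_ofReal (le_abs_rootForm_of_ne_zero h hmin hpq))
    · simp [(h 0).rootForm_one_zero, abs_of_pos (h 0).cfValue_pos]
  refine ⟨_, _, _, (discr_rootForm hne).symm ▸ one_pos, ?_, ?_⟩
  · exact hval ▸ ENNReal.ofReal_ne_top
  · rw [hval, ENNReal.toReal_ofReal (h 0).cfValue_pos.le]

/-! ### Perron's formula for the Lagrange spectrum -/

lemma exists_abs_rootForm_eq {n : ℤ} {k p q : ℕ} (h : ∀ i ∈ Ico n (n + k), CFStep a u v i)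
    (hp : 0 < p) (hqp : q ≤ p) : ∃ p' q' : ℕ, q' ≤ p' ∧ p + q + k ≤ p' + q' ∧
      |rootForm (u n) (v n) p' q'| = |rootForm (u (n + k)) (v (n + k)) p q| := by
  induction k generalizing p q with
  | zero => exact ⟨p, q, hqp, le_rfl, by simp⟩
  | succ k ih =>
    have hstep := h (n + k) (by grind)
    have hle : p ≤ a (n + k) * p := Nat.le_mul_of_pos_left p hstep.one_le
    obtain ⟨p', q', hqp', hsum, heq⟩ := ih (p := a (n + k) * p + q) (q := p) (by grind) (by lia)
      (by lia)
    refine ⟨p', q', hqp', by lia, heq.trans ?_⟩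
    push_cast
    rw [← add_assoc, hstep.rootForm_succ, abs_neg]

lemma le_abs_rootForm_of_one_le_abs {u v p q δ : ℝ} (hu : 0 ≤ u) (hv : 0 ≤ v) (hp : 0 ≤ p)
    (hq : 0 ≤ q) (hδ : δ * (1 + u * v) ≤ p) (h : 1 ≤ |u * p - q|) : δ ≤ |rootForm u v p q| := by
  have huv : 0 < 1 + u * v := by positivity
  rw [rootForm, abs_div, abs_mul, abs_of_pos huv, abs_of_nonneg (by positivity : 0 ≤ p + v * q),
    le_div_iff₀ huv]
  calc δ * (1 + u * v) ≤ p + v * q := by linarith [mul_nonneg hv hq]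
    _ ≤ |u * p - q| * (p + v * q) := le_mul_of_one_le_left (by positivity) h

lemma CFStep.eventually_le_abs_rootForm {n : ℤ} {δ : ℝ} (h : CFStep a u v n) (hu : 0 < u (n + 1))
    (hnext : ∀ᶠ p : ℕ in atTop, ∀ q : ℕ, δ ≤ |rootForm (u (n + 1)) (v (n + 1)) p q|) :
    ∀ᶠ p : ℕ in atTop, ∀ q : ℕ, δ ≤ |rootForm (u n) (v n) p q| := by
  have hslope : 0 < 1 - a n * u n := by
    have hpos : 0 < a n + u (n + 1) := by linarith [h.one_le_cast]
    rw [h.fwd, ← div_eq_mul_inv, sub_pos, div_lt_one hpos]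
    linarith
  have hlarge {c : ℝ} (hc : 0 < c) (d : ℝ) : ∀ᶠ p : ℕ in atTop, d ≤ c * p :=
    (tendsto_natCast_atTop_atTop.const_mul_atTop hc).eventually_ge_atTop d
  obtain ⟨P, hP⟩ := eventually_atTop.1 hnext
  filter_upwards [hlarge h.fwd_pos (P + 1), hlarge hslope (a n),
    hlarge one_pos (δ * (1 + u n * v n))] with p hp₁ hp₂ hp₃ q
  by_cases hfar : 1 ≤ |u n * p - q|
  · exact le_abs_rootForm_of_one_le_abs h.fwd_pos.le h.bwd_nonneg p.cast_nonneg q.cast_nonneg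
      (by linarith) hfar
  · obtain ⟨hq₁, hq₂⟩ := abs_lt.1 (not_le.1 hfar)
    have hPq : P ≤ q := by
      have : (P : ℝ) < q := by linarith
      exact_mod_cast this.le
    have hqp : a n * q ≤ p := by
      have : a n * (q : ℝ) ≤ p := by nlinarith [h.one_le_cast]
      exact_mod_cast this
    obtain ⟨r, rfl⟩ := Nat.exists_eq_add_of_le hqp
    have := hP q hPq r
    rw [h.rootForm_succ, abs_neg] at this
    exact_mod_cast this

lemma eventually_le_abs_rootForm {n : ℤ} {δ : ℝ} (h : ∀ i ≥ n, CFStep a u v i)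
    (hδ : ∀ᶠ i in atTop, δ ≤ (cfValue a u v i)⁻¹) :
    ∀ᶠ p : ℕ in atTop, ∀ q : ℕ, δ ≤ |rootForm (u n) (v n) p q| := by
  obtain ⟨N, hN⟩ := eventually_atTop.1 hδ
  have hbase : ∀ᶠ p : ℕ in atTop, ∀ q : ℕ,
      δ ≤ |rootForm (u (max N n + 1)) (v (max N n + 1)) p q| := by
    filter_upwards [eventually_gt_atTop 0] with p hp q
    exact le_abs_rootForm (fun i hi => h i (le_of_max_le_right hi))
      (fun i hi => hN i (le_of_max_le_left hi)) (Nat.add_pos_left hp q)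
  refine Int.leInductionDown (motive := fun m _ => n ≤ m →
    ∀ᶠ p : ℕ in atTop, ∀ q : ℕ, δ ≤ |rootForm (u m) (v m) p q|) (fun _ => hbase)
    (fun m _ ih hm => ?_) n (by lia) le_rfl
  have hstep := h (m - 1) hm
  refine hstep.eventually_le_abs_rootForm ?_ ?_ <;> rw [sub_add_cancel]
  · exact (h m (by lia)).fwd_pos
  · exact ih (by lia)

lemma abs_rootForm_fract_zero (θ : ℝ) (p : ℕ) (q : ℝ) :
    |rootForm (Int.fract θ) 0 p q| = p * |p * θ - (p * ⌊θ⌋ + q)| := by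
  have hform : rootForm (Int.fract θ) 0 p q = p * (p * θ - (p * ⌊θ⌋ + q)) := by
    rw [rootForm, Int.fract]
    ring
  rw [hform, abs_mul, Nat.abs_cast]

lemma exists_abs_rootForm_eq_mul_distNearestInt (θ : ℝ) (p : ℕ) :
    ∃ q : ℕ, |rootForm (Int.fract θ) 0 p q| = p * distNearestInt (p * θ) := by
  have hround : 0 ≤ round (p * Int.fract θ) := by
    rw [round_eq]
    positivity
  obtain ⟨q, hq⟩ := Int.eq_ofNat_of_zero_le hround
  have hsplit : p * θ = p * Int.fract θ + (p * ⌊θ⌋ : ℤ) := by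
    push_cast
    rw [← mul_add, Int.fract_add_floor]
  refine ⟨q, ?_⟩
  rw [abs_rootForm_fract_zero, distNearestInt, hsplit, round_add_intCast, hq]
  push_cast
  rw [add_comm (q : ℝ)]

lemma mul_distNearestInt_le_abs_rootForm (θ : ℝ) (p q : ℕ) :
    p * distNearestInt (p * θ) ≤ |rootForm (Int.fract θ) 0 p q| := by
  rw [abs_rootForm_fract_zero]
  exact mul_le_mul_of_nonneg_left (mod_cast round_le (p * θ) (p * ⌊θ⌋ + q)) p.cast_nonneg

lemma distNearestInt_pos {x : ℝ} (hx : Irrational x) : 0 < distNearestInt x :=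
  abs_pos.2 (sub_ne_zero.2 (hx.ne_int _))

section

variable {θ : ℝ}

lemma exists_cfValue_le_one_div (hθ : Irrational θ) {n : ℕ}
    (h : ∀ i ∈ Icc (0 : ℤ) n, CFStep a u v i) (hu : u 0 = Int.fract θ) (hv : v 0 = 0) :
    ∃ p : ℕ, n ≤ 2 * p ∧ cfValue a u v n ≤ 1 / (p * distNearestInt (p * θ)) := by
  obtain ⟨p, q, hqp, hsum, heq⟩ := exists_abs_rootForm_eq (n := 0) (k := n) (p := 1) (q := 0)
    (fun i hi => h i (by grind)) one_pos zero_le_one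
  have hn := h n (by grind)
  have hp : 0 < p := by lia
  have hdist := distNearestInt_pos (hθ.natCast_mul hp.ne')
  rw [zero_add, Nat.cast_one, Nat.cast_zero, hn.rootForm_one_zero,
    abs_of_pos (inv_pos.2 hn.cfValue_pos), hu, hv] at heq
  refine ⟨p, by lia, ?_⟩
  rw [one_div, le_inv_comm₀ hn.cfValue_pos (by positivity), ← heq]
  exact mul_distNearestInt_le_abs_rootForm θ p q

lemma limsup_cfValue_le_lagrangeVal (hθ : Irrational θ) (h : ∀ n ≥ 0, CFStep a u v n)
    (hu : u 0 = Int.fract θ) (hv : v 0 = 0) :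
    limsup (fun n : ℕ => ENNReal.ofReal (cfValue a u v n)) atTop ≤ lagrangeVal θ := by
  choose p hnp hp using fun n : ℕ =>
    exists_cfValue_le_one_div (n := n) hθ (fun i hi => h i hi.1) hu hv
  have htendsto : Tendsto p atTop atTop := tendsto_atTop.2 fun b => by
    filter_upwards [eventually_ge_atTop (2 * b)] with n hn
    linarith [hnp n]
  refine (limsup_le_limsup (.of_forall fun n => ENNReal.ofReal_le_ofReal (hp n))).trans ?_
  exact (limsup_comp (fun q : ℕ => ENNReal.ofReal (1 / (q * distNearestInt (q * θ)))) p
    atTop).trans_le (limsup_le_limsup_of_le htendsto)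

lemma lagrangeVal_le_limsup_cfValue (h : ∀ n ≥ 0, CFStep a u v n) (hu : u 0 = Int.fract θ)
    (hv : v 0 = 0) :
    lagrangeVal θ ≤ limsup (fun n : ℕ => ENNReal.ofReal (cfValue a u v n)) atTop := by
  refine le_of_forall_gt_imp_ge_of_dense fun c hc => ?_
  obtain rfl | hctop := eq_or_ne c ⊤
  · exact le_top
  lift c to NNReal using hctop
  have hev : ∀ᶠ n in atTop, (c : ℝ)⁻¹ ≤ (cfValue a u v n)⁻¹ := by
    rw [← Nat.map_cast_int_atTop, eventually_map]
    filter_upwards [eventually_lt_of_limsup_lt hc] with n hn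
    have hpos := (h n n.cast_nonneg).cfValue_pos
    exact inv_anti₀ hpos ((ENNReal.ofReal_lt_coe_iff hpos.le).1 hn).le
  have hform := eventually_le_abs_rootForm h hev
  rw [hu, hv] at hform
  refine limsup_le_of_le (h := ?_)
  filter_upwards [hform] with p hp
  obtain ⟨q, hq⟩ := exists_abs_rootForm_eq_mul_distNearestInt θ p
  have hcpos : (0 : ℝ) < c := NNReal.coe_pos.2 (ENNReal.coe_pos.1 (pos_of_gt hc))
  rw [one_div]
  exact ENNReal.ofReal_le_of_le_toReal (inv_le_of_inv_le₀ hcpos (hq ▸ hp q))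

theorem lagrangeVal_eq_limsup_cfValue (hθ : Irrational θ) (h : ∀ n ≥ 0, CFStep a u v n)
    (hu : u 0 = Int.fract θ) (hv : v 0 = 0) :
    lagrangeVal θ = limsup (fun n : ℕ => ENNReal.ofReal (cfValue a u v n)) atTop :=
  (lagrangeVal_le_limsup_cfValue h hu hv).antisymm (limsup_cfValue_le_lagrangeVal hθ h hu hv)

end

lemma exists_cfStep_of_irrational {θ : ℝ} (hθ : Irrational θ) :
    ∃ a u v, u 0 = Int.fract θ ∧ v 0 = 0 ∧ ∀ n ≥ 0, CFStep a u v n := by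
  let x : ℕ → ℝ := fun k => (fun y => Int.fract y⁻¹)^[k] (Int.fract θ)
  have hx (k : ℕ) : x (k + 1) = Int.fract (x k)⁻¹ := Function.iterate_succ_apply' ..
  have hirr (k : ℕ) : Irrational (x k) := by
    induction k with
    | zero => exact hθ.sub_intCast _
    | succ k ih => exact hx k ▸ ih.inv.sub_intCast _
  have hx₀ (k : ℕ) : 0 ≤ x k := by
    cases k with
    | zero => exact Int.fract_nonneg _
    | succ k => exact hx k ▸ Int.fract_nonneg _
  have hx₁ (k : ℕ) : x k ≤ 1 := by
    cases k with
    | zero => exact (Int.fract_lt_one _).le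
    | succ k => exact hx k ▸ (Int.fract_lt_one _).le
  let y : ℕ → ℝ := fun k => Nat.rec 0 (fun k y => (⌊(x k)⁻¹⌋₊ + y)⁻¹) k
  have hy (k : ℕ) : 0 ≤ y k := by
    induction k with
    | zero => exact le_rfl
    | succ k ih => exact inv_nonneg.2 (add_nonneg (Nat.cast_nonneg _) ih)
  refine ⟨fun n => ⌊(x n.toNat)⁻¹⌋₊, fun n => x n.toNat, fun n => y n.toNat, rfl, rfl,
    fun n hn => ?_⟩
  lift n to ℕ using hn
  have hpos : 0 < x n := (hx₀ n).lt_of_ne' (hirr n).ne_zero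
  refine ⟨Nat.le_floor ?_, hx₀ _, hy _, ?_, rfl⟩
  · exact mod_cast (one_le_inv₀ hpos).2 (hx₁ n)
  · change x n = (⌊(x n)⁻¹⌋₊ + x (n + 1))⁻¹
    rw [hx, natCast_floor_eq_intCast_floor (inv_nonneg.2 hpos.le), Int.floor_add_fract, inv_inv]

/-! ### Factors of sequences and bounds for the values -/

/-- The factor `a n, a (n + 1), …, a (n + k - 1)` of the sequence `a`. -/
def subword (a : ℤ → ℕ) (n : ℤ) (k : ℕ) : List ℕ := (List.range k).map fun i : ℕ => a (n + i)

lemma subword_succ (a : ℤ → ℕ) (n : ℤ) (k : ℕ) :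
    subword a n (k + 1) = a n :: subword a (n + 1) k := by
  simp [subword, List.range_succ_eq_map, Function.comp_def, add_assoc, add_comm (1 : ℤ)]

lemma subword_succ' (a : ℤ → ℕ) (n : ℤ) (k : ℕ) :
    subword a n (k + 1) = subword a n k ++ [a (n + k)] := by
  simp [subword, List.range_succ]

lemma subword_add (a : ℤ → ℕ) (n : ℤ) (j k : ℕ) :
    subword a n (j + k) = subword a n j ++ subword a (n + j) k := by
  simp [subword, List.range_add, Function.comp_def, add_assoc]

lemma length_subword (a : ℤ → ℕ) (n : ℤ) (k : ℕ) : (subword a n k).length = k := by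
  simp [subword]

lemma subword_mirror (a : ℤ → ℕ) (n : ℤ) (k : ℕ) :
    subword (fun i => a (-i - 1)) (-(n + k)) k = (subword a n k).reverse := by
  induction k with
  | zero => rfl
  | succ k ih =>
    rw [subword_succ, subword_succ', List.reverse_append, ← ih]
    push_cast
    simp only [List.reverse_singleton, List.singleton_append]
    congr 2 <;> ring_nf

lemma subword_eq_iff {a b : ℤ → ℕ} {n m : ℤ} {k : ℕ} :
    subword a n k = subword b m k ↔ ∀ i < k, a (n + i) = b (m + i) := by
  simp [subword]

lemma exists_fwd (ha : ∀ n, 1 ≤ a n) :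
    ∃ u : ℤ → ℝ, ∀ n, 0 ≤ u n ∧ u n = (a n + u (n + 1))⁻¹ := by
  let f (m : ℕ) (n : ℤ) : ℝ := (subword a n (m - n).toNat).foldr
    (fun (d : ℕ) (x : ℝ) => (d + x)⁻¹) 0
  have hf₀ (m : ℕ) (n : ℤ) : 0 ≤ f m n := by
    have (l : List ℕ) : 0 ≤ l.foldr (fun (d : ℕ) (x : ℝ) => (d + x)⁻¹) 0 := by
      induction l with
      | nil => exact le_rfl
      | cons d l ih => exact inv_nonneg.2 (add_nonneg d.cast_nonneg ih)
    exact this _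
  have hf {m : ℕ} {n : ℤ} (h : n < m) : f m n = (a n + f m (n + 1))⁻¹ := by
    change List.foldr _ _ (subword a n (m - n).toNat) = _
    rw [show (m - n).toNat = (m - (n + 1)).toNat + 1 by lia, subword_succ, List.foldr_cons]
  have hf₁ (m : ℕ) (n : ℤ) : f m n ≤ 1 := by
    obtain h | h := lt_or_ge n m
    · rw [hf h]
      have : (1 : ℝ) ≤ a n := mod_cast ha n
      exact inv_le_one_of_one_le₀ (by linarith [hf₀ m (n + 1)])
    · change List.foldr _ _ (subword a n (m - n).toNat) ≤ 1
      rw [Int.toNat_of_nonpos (by lia)]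
      exact zero_le_one
  have hlim (n : ℤ) : ∃ x ∈ Icc (0 : ℝ) 1, Tendsto (fun m => f m n) (hyperfilter ℕ) (𝓝 x) :=
    isCompact_Icc.ultrafilter_le_nhds ((hyperfilter ℕ).map fun m => f m n)
      (tendsto_principal.2 <| .of_forall fun m => ⟨hf₀ m n, hf₁ m n⟩)
  choose u hu hlim using hlim
  refine ⟨u, fun n => ⟨(hu n).1, tendsto_nhds_unique_of_eventuallyEq (hlim n)
    (((hlim (n + 1)).const_add _).inv₀ ?_) ?_⟩⟩
  · have : (1 : ℝ) ≤ a n := mod_cast ha n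
    linarith [(hu (n + 1)).1]
  · filter_upwards [(eventually_gt_atTop n.toNat).filter_mono Nat.hyperfilter_le_atTop] with m hm
    exact hf (by lia)

lemma exists_cfStep (ha : ∀ n, 1 ≤ a n) : ∃ u v, ∀ n, CFStep a u v n := by
  obtain ⟨u, hu⟩ := exists_fwd ha
  obtain ⟨v, hv⟩ := exists_fwd fun n => ha (-n - 1)
  refine ⟨u, fun n => v (-n), fun n => ⟨ha n, (hu (n + 1)).1, (hv _).1, (hu n).2, ?_⟩⟩
  simpa using (hv (-(n + 1))).2

/-- A rational upper or lower bound for the continued fractions `[0; d₁, …, dₖ, …]` which start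
with the given partial quotients, according to whether `upper` is `true` or `false`. -/
def cfBound : (upper : Bool) → List ℕ → ℚ
  | upper, [] => if upper then 1 else 0
  | upper, d :: r => (d + cfBound (!upper) r)⁻¹

lemma cfBound_nonneg (upper : Bool) (l : List ℕ) : 0 ≤ cfBound upper l := by
  induction l generalizing upper with
  | nil => cases upper <;> simp [cfBound]
  | cons d r ih => exact inv_nonneg.2 (add_nonneg d.cast_nonneg (ih _))

theorem CFStep.fwd_mem_Icc {n : ℤ} {k : ℕ} (h : ∀ i ∈ Icc n (n + k), CFStep a u v i) :
    u n ∈ Icc (cfBound false (subword a n k) : ℝ) (cfBound true (subword a n k)) := by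
  induction k generalizing n with
  | zero =>
    have hn := h n (by simp)
    simpa [subword, cfBound] using ⟨hn.fwd_pos.le, hn.fwd_le_one⟩
  | succ k ih =>
    have hn := h n ⟨le_rfl, by lia⟩
    have ⟨hl, hu⟩ := ih (n := n + 1) fun i hi => h i ⟨by grind, by grind⟩
    have hd := hn.one_le_cast
    have hl₀ : (0 : ℝ) ≤ cfBound false (subword a (n + 1) k) := mod_cast cfBound_nonneg _ _
    rw [subword_succ, hn.fwd, cfBound, cfBound]
    push_cast
    exact ⟨by simpa using inv_anti₀ (by linarith [hn.fwd_nonneg]) (by linarith),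
      by simpa using inv_anti₀ (by linarith) (by linarith)⟩

theorem CFStep.bwd_mem_Icc {n : ℤ} {k : ℕ} (h : ∀ i ∈ Icc (n - 1) (n + k), CFStep a u v i) :
    v (n + k) ∈ Icc (cfBound false (subword a n k).reverse : ℝ)
      (cfBound true (subword a n k).reverse) := by
  rw [← subword_mirror]
  have := fwd_mem_Icc (n := -(n + k)) (k := k) fun i hi => (h (-i - 1) ⟨by grind, by grind⟩).mirror
  simpa using this

/-- Bound for `cfValue` at the letter `d` of the word `l.reverse ++ d :: r`. -/
def valueBound (upper : Bool) (l : List ℕ) (d : ℕ) (r : List ℕ) : ℚ :=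
  d + cfBound upper l + cfBound upper r

theorem cfValue_mem_Icc {n : ℤ} {j k : ℕ}
    (h : ∀ i ∈ Icc (n - 1) (n + j + k + 1), CFStep a u v i) :
    cfValue a u v (n + j) ∈
      Icc (valueBound false (subword a n j).reverse (a (n + j)) (subword a (n + j + 1) k) : ℝ)
        (valueBound true (subword a n j).reverse (a (n + j)) (subword a (n + j + 1) k)) := by
  have ⟨hul, huu⟩ := CFStep.fwd_mem_Icc (n := n + j + 1) (k := k)
    fun i hi => h i ⟨by grind, by grind⟩
  have ⟨hvl, hvu⟩ := CFStep.bwd_mem_Icc (n := n) (k := j) fun i hi => h i ⟨by grind, by grind⟩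
  rw [cfValue, valueBound, valueBound]
  push_cast
  exact ⟨by linarith, by linarith⟩

/-- The factor of `a` of length `2 * r + 1` centred at `n`. -/
def window (a : ℤ → ℕ) (n : ℤ) (r : ℕ) : List ℕ := subword a (n - r) (2 * r + 1)

lemma window_zero (a : ℤ → ℕ) (n : ℤ) : window a n 0 = [a n] := by simp [window, subword]

lemma window_succ (a : ℤ → ℕ) (n : ℤ) (r : ℕ) :
    window a n (r + 1) = a (n - (r + 1)) :: (window a n r ++ [a (n + (r + 1))]) := by
  rw [window, show 2 * (r + 1) + 1 = 2 * r + 1 + 1 + 1 by ring, subword_succ, subword_succ', window]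
  push_cast
  congr 3 <;> ring_nf

lemma window_eq_iff {a b : ℤ → ℕ} {n m : ℤ} {r : ℕ} :
    window a n r = window b m r ↔ ∀ i ∈ Icc (-r : ℤ) r, a (n + i) = b (m + i) := by
  rw [window, window, subword_eq_iff]
  refine ⟨fun h i hi => ?_, fun h i hi => ?_⟩
  · have := h (i + r).toNat (by grind)
    rwa [Int.toNat_of_nonneg (by grind), sub_add_add_cancel, sub_add_add_cancel] at this
  · rw [sub_add_eq_add_sub, sub_add_eq_add_sub, add_sub_assoc, add_sub_assoc]
    exact h (i - r) ⟨by lia, by lia⟩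

lemma window_mirror (a : ℤ → ℕ) (n : ℤ) (r : ℕ) :
    window (fun i => a (-i - 1)) (-n - 1) r = (window a n r).reverse := by
  rw [window, window, ← subword_mirror]
  push_cast
  ring_nf

lemma take_drop_window (a : ℤ → ℕ) (n : ℤ) {r s t : ℕ} (h : s + 2 * t + 1 ≤ 2 * r + 1) :
    ((window a n r).drop s).take (2 * t + 1) = window a (n - r + s + t) t := by
  obtain ⟨m, hm⟩ := Nat.exists_eq_add_of_le h
  rw [window, hm, add_assoc s, add_assoc s, subword_add, List.drop_left' (length_subword ..),
    subword_add, List.take_left' (length_subword ..), window, add_sub_cancel_right]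

/-- `valueBound` at the middle letter of a word of odd length. -/
def centreBound (upper : Bool) (w : List ℕ) : ℚ :=
  valueBound upper (w.take (w.length / 2)).reverse (w.getD (w.length / 2) 0)
    (w.drop (w.length / 2 + 1))

theorem cfValue_mem_Icc_centreBound {n : ℤ} {r : ℕ}
    (h : ∀ i ∈ Icc (n - r - 1) (n + r + 1), CFStep a u v i) :
    cfValue a u v n ∈
      Icc (centreBound false (window a n r) : ℝ) (centreBound true (window a n r)) := by
  have hsplit : window a n r = subword a (n - r) r ++ a n :: subword a (n + 1) r := by
    rw [window, two_mul, add_assoc, subword_add, subword_succ, sub_add_cancel]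
  have hlength : (window a n r).length / 2 = r := by rw [window, length_subword]; lia
  have hleft := length_subword a (n - r) r
  have := cfValue_mem_Icc (n := n - r) (j := r) (k := r) fun i hi => h i (by grind)
  rw [centreBound, centreBound, hlength, hsplit]
  simpa only [List.take_left' hleft, List.drop_append, hleft,
    List.getD_append_right _ _ _ _ hleft.le, List.drop_eq_nil_of_le (hleft.trans_le (r.le_succ)),
    Nat.sub_self, List.getD_cons_zero, Nat.add_sub_cancel_left, List.drop_succ_cons,
    List.drop_zero, List.nil_append, sub_add_cancel] using this

/-! ### A gap of the Lagrange spectrum -/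

/-- Left end of an interval which misses the Lagrange spectrum. It lies inside a gap and is not
optimal. -/
def gapLow : ℚ := 3.7096998597

/-- Right end of the interval starting at `gapLow` which misses the Lagrange spectrum. -/
def gapHigh : ℚ := 3.7096998597503

/-- A continued fraction step at which the value stays below `gapHigh`. -/
structure TameStep (a : ℤ → ℕ) (u v : ℤ → ℝ) (n : ℤ) : Prop extends CFStep a u v n where
  lt_gapHigh : cfValue a u v n < gapHigh

lemma TameStep.mirror {n : ℤ} (h : TameStep a u v (-n - 1)) :
    TameStep (fun i => a (-i - 1)) (fun i => v (-i)) (fun i => u (-i)) n where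
  toCFStep := h.toCFStep.mirror
  lt_gapHigh := by rw [cfValue_mirror]; exact h.lt_gapHigh

lemma TameStep.digit_mem {n : ℤ} (h : TameStep a u v n) : a n ∈ [1, 2, 3] := by
  have hlt : (a n : ℝ) < 4 := by
    have := h.lt_gapHigh
    norm_num [cfValue, gapHigh] at this
    linarith [h.fwd_nonneg, h.bwd_nonneg]
  have : a n < 4 := mod_cast hlt
  have := h.one_le
  simp only [List.mem_cons, List.not_mem_nil]
  lia

/-- No digit `3` of the word `w`, read after the word `l.reverse`, forces a value of at least
`gapHigh`; the digits `1` and `2` never do in words over `1, 2, 3`. -/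
def peakless : (l w : List ℕ) → Bool
  | _, [] => true
  | l, d :: r => (d != 3 || valueBound false l d r < gapHigh) && peakless (d :: l) r

lemma peakless_subword {n : ℤ} {j k : ℕ} (h : ∀ i ∈ Icc (n - 1) (n + j + k), TameStep a u v i) :
    peakless (subword a n j).reverse (subword a (n + j) k) := by
  induction k generalizing j with
  | zero => rfl
  | succ k ih =>
    have hvalue := (cfValue_mem_Icc (n := n) (j := j) (k := k)
      fun i hi => (h i (by grind)).toCFStep).1.trans_lt
      (h (n + j) (by grind)).lt_gapHigh
    have htail := ih (j := j + 1) (by grind)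
    rw [subword_succ', List.reverse_append] at htail
    rw [subword_succ, peakless, Bool.and_eq_true, Bool.or_eq_true]
    exact ⟨.inr (decide_eq_true (mod_cast hvalue)), by simpa [add_assoc] using htail⟩

lemma peakless_window {n : ℤ} {r : ℕ}
    (h : ∀ i ∈ Icc (n - r - 1) (n + r + 1), TameStep a u v i) : peakless [] (window a n r) := by
  have := peakless_subword (n := n - r) (j := 0) (k := 2 * r + 1) fun i hi => h i (by grind)
  rwa [Nat.cast_zero, add_zero] at this

/-- The word is `peakless` and its middle letter does not force a value of at most `gapLow`. -/
def isCentral (w : List ℕ) : Bool := gapLow < centreBound true w && peakless [] w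

lemma isCentral_window {n : ℤ} {r : ℕ}
    (h : ∀ i ∈ Icc (n - r - 1) (n + r + 1), TameStep a u v i) (hn : gapLow < cfValue a u v n) :
    isCentral (window a n r) := by
  have := hn.trans_le (cfValue_mem_Icc_centreBound fun i hi => (h i hi).toCFStep).2
  rw [isCentral, Bool.and_eq_true]
  exact ⟨decide_eq_true (mod_cast this), peakless_window h⟩

/-- The words obtained from `w` by adding `k` letters among `1, 2, 3` on each side, one pair at a
time, keeping only words with property `p` at every stage. -/
def extensions (p : List ℕ → Bool) : ℕ → List ℕ → List (List ℕ)
  | 0, w => [w]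
  | k + 1, w => (extensions p k w).flatMap fun w =>
      ([1, 2, 3].flatMap fun x => [1, 2, 3].map fun y => x :: (w ++ [y])).filter p

lemma window_mem_extensions {p : List ℕ → Bool} {n : ℤ} {r k : ℕ}
    (hdigit : ∀ i ∈ Icc (n - r - k) (n + r + k), a i ∈ [1, 2, 3])
    (hp : ∀ j ≤ r + k, p (window a n j)) :
    window a n (r + k) ∈ extensions p k (window a n r) := by
  induction k with
  | zero => exact List.mem_singleton_self _
  | succ k ih =>
    refine List.mem_flatMap.2 ⟨_, ih (by grind) (by grind), List.mem_filter.2 ⟨?_, hp _ le_rfl⟩⟩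
    rw [← add_assoc, window_succ]
    exact List.mem_flatMap.2 ⟨_, hdigit _ (by grind),
      List.mem_map.2 ⟨_, hdigit _ (by grind), rfl⟩⟩

/-- The sequence of period `3, 2, 2, 2, 1, 2, 3`. -/
def perWord (i : ℤ) : ℕ := [3, 2, 2, 2, 1, 2, 3].getD (i % 7).toNat 0

lemma perWord_emod_add (i j : ℤ) : perWord (i % 7 + j) = perWord (i + j) := by
  simp [perWord]

lemma window_perWord_emod (i : ℤ) (r : ℕ) : window perWord (i % 7) r = window perWord i r :=
  window_eq_iff.2 fun _ _ => perWord_emod_add ..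

lemma central_extensions : ∀ d ∈ [1, 2, 3], ∀ w ∈ extensions isCentral 9 [d],
    w = window perWord 0 9 ∨ w.reverse = window perWord 0 9 := by
  decide +kernel

lemma peakless_extensions : ∀ w ∈ extensions (peakless []) 8 (window perWord 0 9),
    (w.drop 1).take 19 = window perWord 0 9 := by
  decide +kernel

lemma centreBound_perWord_lt : ∀ i ∈ Finset.range 7,
    centreBound true (window perWord i 14) < gapLow := by
  decide +kernel

lemma window_perWord_sub_seven {n : ℤ}
    (h : ∀ i ∈ Icc (n - 18) (n + 18), TameStep a u v i)
    (hn : window a n 9 = window perWord 0 9) : window a (n - 7) 9 = window perWord 0 9 := by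
  have hmem : window a n 17 ∈ extensions (peakless []) 8 (window a n 9) :=
    window_mem_extensions (r := 9) (k := 8) (fun i hi => (h i (by grind)).digit_mem)
      fun j hj => peakless_window fun i hi => h i (by grind)
  rw [hn] at hmem
  have hextend := peakless_extensions _ hmem
  rw [take_drop_window a n (s := 1) (t := 9) (by lia)] at hextend
  convert hextend using 2
  push_cast
  ring

lemma window_perWord_sub_seven_mul {n M : ℤ} {k : ℕ} (hk : M + 7 * k + 11 ≤ n)
    (h : ∀ i ∈ Icc M (n + 18), TameStep a u v i)
    (hn : window a n 9 = window perWord 0 9) : window a (n - 7 * k) 9 = window perWord 0 9 := by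
  induction k with
  | zero => simpa using hn
  | succ k ih =>
    have := window_perWord_sub_seven (fun i hi => h i (by grind)) (ih (by grind))
    convert this using 2
    push_cast
    ring

lemma eq_perWord_of_window {n M i : ℤ} (h : ∀ i ∈ Icc M (n + 18), TameStep a u v i)
    (hn : window a n 9 = window perWord 0 9) (hi : i ∈ Icc (M + 11) n) :
    a i = perWord (i - n) := by
  obtain ⟨k, hk⟩ : ∃ k : ℕ, (k : ℤ) = (n - i) / 7 := ⟨((n - i) / 7).toNat, by grind⟩
  have hwindow := window_perWord_sub_seven_mul (k := k) (by grind) h hn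
  have hdigit := window_eq_iff.1 hwindow (i - (n - 7 * k)) (by grind)
  rw [add_sub_cancel, zero_add, ← sub_add, sub_add_eq_add_sub] at hdigit
  rw [hdigit, perWord, perWord]
  congr 2
  lia

theorem cfValue_lt_gapLow_of_lt {n M j : ℤ} (h : ∀ i ∈ Icc M (n + 18), TameStep a u v i)
    (hn : window a n 9 = window perWord 0 9) (hj : j ∈ Icc (M + 25) (n - 15)) :
    cfValue a u v j < gapLow := by
  have hwindow : window a j 14 = window perWord ((j - n) % 7) 14 := by
    rw [window_perWord_emod, window_eq_iff]
    intro i hi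
    rw [eq_perWord_of_window h hn (by grind), add_sub_right_comm]
  have hbound := centreBound_perWord_lt ((j - n) % 7).toNat (by grind)
  rw [Int.toNat_of_nonneg (by grind), ← hwindow] at hbound
  exact (cfValue_mem_Icc_centreBound (r := 14) fun i hi => (h i (by grind)).toCFStep).2.trans_lt
    (mod_cast hbound)

theorem cfValue_lt_gapLow_of_gt {n M j : ℤ} (h : ∀ i ∈ Icc (n - 18) M, TameStep a u v i)
    (hn : (window a n 9).reverse = window perWord 0 9) (hj : j ∈ Icc (n + 15) (M - 25)) :
    cfValue a u v j < gapLow := by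
  rw [← window_mirror] at hn
  have := cfValue_lt_gapLow_of_lt (M := -M - 1) (j := -j - 1)
    (fun i hi => (h (-i - 1) (by grind)).mirror) hn (by grind)
  rwa [cfValue_mirror, show -(-j - 1) - 1 = j by ring] at this

lemma window_eq_or_reverse_eq {n : ℤ} (h : ∀ i ∈ Icc (n - 10) (n + 10), TameStep a u v i)
    (hn : gapLow < cfValue a u v n) :
    window a n 9 = window perWord 0 9 ∨ (window a n 9).reverse = window perWord 0 9 := by
  have hmem : window a n 9 ∈ extensions isCentral 9 [a n] := window_zero a n ▸
    window_mem_extensions (r := 0) (k := 9) (fun i hi => (h i (by grind)).digit_mem)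
      fun j hj => isCentral_window (fun i hi => h i (by grind)) hn
  exact central_extensions _ (h n (by grind)).digit_mem _ hmem

theorem eventually_cfValue_le_gapLow (h : ∀ᶠ n in atTop, TameStep a u v n) :
    ∀ᶠ n in atTop, cfValue a u v n ≤ gapLow := by
  by_contra hfreq
  simp only [not_eventually, not_le, frequently_atTop] at hfreq
  obtain ⟨N, hN⟩ := eventually_atTop.1 h
  obtain ⟨m₁, hm₁, hlt₁⟩ := hfreq (N + 25)
  obtain ⟨m₂, hm₂, hlt₂⟩ := hfreq (m₁ + 15)
  obtain ⟨m₃, hm₃, hlt₃⟩ := hfreq (m₂ + 15)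
  -- A periodic window at `m₂` propagates to the left, a reversed one to the right.
  obtain hper | hrev := window_eq_or_reverse_eq (fun i hi => hN i (by grind)) hlt₂
  · exact hlt₁.not_gt (cfValue_lt_gapLow_of_lt (fun i hi => hN i hi.1) hper (by grind))
  · exact hlt₃.not_gt (cfValue_lt_gapLow_of_gt (M := m₃ + 25)
      (fun i hi => hN i (by grind)) hrev (by grind))

theorem lagrangeVal_le_gapLow {θ : ℝ} (hθ : Irrational θ)
    (h : lagrangeVal θ < ENNReal.ofReal gapHigh) : lagrangeVal θ ≤ ENNReal.ofReal gapLow := by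
  obtain ⟨a, u, v, hu, hv, hstep⟩ := exists_cfStep_of_irrational hθ
  rw [lagrangeVal_eq_limsup_cfValue hθ hstep hu hv] at h ⊢
  have htame : ∀ᶠ n in atTop, TameStep a u v n := by
    rw [← Nat.map_cast_int_atTop, eventually_map]
    filter_upwards [eventually_lt_of_limsup_lt h] with n hn
    exact ⟨hstep n n.cast_nonneg, (ENNReal.ofReal_lt_ofReal_iff_of_nonneg
      (hstep n n.cast_nonneg).cfValue_pos.le).1 hn⟩
  have hle := eventually_cfValue_le_gapLow htame
  rw [← Nat.map_cast_int_atTop, eventually_map] at hle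
  exact limsup_le_of_le (h := hle.mono fun n hn => ENNReal.ofReal_le_ofReal hn)

theorem notMem_lagrangeSpectrum {x : ℝ} (hlow : gapLow < x) (hhigh : x < gapHigh) :
    x ∉ LagrangeSpectrum := by
  rintro ⟨θ, hθ, htop, rfl⟩
  have hle := lagrangeVal_le_gapLow hθ ((ENNReal.lt_ofReal_iff_toReal_lt htop).2 hhigh)
  exact hlow.not_ge (ENNReal.toReal_le_of_le_ofReal (by norm_num [gapLow]) hle)

/-! ### A Markov value in the gap -/

/-- The sequence which agrees with `perWord` up to the index `12`, and ends in `2, 1, 2, 1, …`. -/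
def markovWord (i : ℤ) : ℕ := if i ≤ 12 then perWord i else if i % 2 = 1 then 2 else 1

lemma one_le_perWord (i : ℤ) : 1 ≤ perWord i := by
  have h : ∀ r ∈ Finset.range 7, 1 ≤ perWord r := by decide
  have := h (i % 7).toNat (by grind)
  simpa [perWord, Int.toNat_of_nonneg (Int.emod_nonneg i (by decide : (7 : ℤ) ≠ 0))] using this

lemma one_le_markovWord (i : ℤ) : 1 ≤ markovWord i := by
  rw [markovWord]
  split_ifs
  exacts [one_le_perWord i, one_le_two, le_rfl]

lemma cfValue_lt_gapLow_of_window {w : List ℕ} {n : ℤ} {r : ℕ} (h : ∀ i, CFStep a u v i)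
    (hw : window a n r = w) (hlt : centreBound true w < gapLow) : cfValue a u v n < gapLow :=
  (cfValue_mem_Icc_centreBound fun i _ => h i).2.trans_lt (by rw [hw]; exact mod_cast hlt)

lemma cfValue_markovWord_zero (h : ∀ n, CFStep markovWord u v n) :
    cfValue markovWord u v 0 ∈ Ioo (gapLow : ℝ) gapHigh := by
  have hbound : gapLow < centreBound false (window markovWord 0 20) ∧
      centreBound true (window markovWord 0 20) < gapHigh := by decide +kernel
  have hmem := cfValue_mem_Icc_centreBound (n := 0) (r := 20) fun i _ => h i
  exact ⟨hmem.1.trans_lt' (mod_cast hbound.1), hmem.2.trans_lt (mod_cast hbound.2)⟩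

lemma cfValue_markovWord_lt (h : ∀ n, CFStep markovWord u v n) {n : ℤ} (hn : n ≠ 0) :
    cfValue markovWord u v n < gapLow := by
  have hbound : ∀ m ∈ Finset.Icc (-1 : ℤ) 21, m ≠ 0 →
      centreBound true (window markovWord m 7) < gapLow := by decide +kernel
  obtain hleft | hmid | hright : n ≤ -2 ∨ n ∈ Finset.Icc (-1) 21 ∨ 20 ≤ n := by grind
  · have hw : window markovWord n 14 = window perWord (n % 7) 14 := by
      rw [window_perWord_emod, window_eq_iff]
      exact fun i hi => if_pos (by grind)
    have hper := centreBound_perWord_lt (n % 7).toNat (by grind)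
    rw [Int.toNat_of_nonneg (by grind)] at hper
    exact cfValue_lt_gapLow_of_window h hw hper
  · exact cfValue_lt_gapLow_of_window h rfl (hbound n hmid hn)
  · have hw : window markovWord n 7 = window markovWord (20 + n % 2) 7 := by
      refine window_eq_iff.2 fun i hi => ?_
      grind [markovWord]
    exact cfValue_lt_gapLow_of_window h hw (hbound _ (by grind) (by grind))

end Cusick

/-- **Negative answer to Cusick's conjecture**: there is `x > √12` with `x ∈ M` and `x ∉ L`. -/
theorem cusick_conjecture_false :
    ∃ x : ℝ, Real.sqrt 12 < x ∧ x ∈ MarkovSpectrum ∧ x ∉ LagrangeSpectrum := by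
  obtain ⟨u, v, h⟩ := Cusick.exists_cfStep Cusick.one_le_markovWord
  have ⟨hlow, hhigh⟩ := Cusick.cfValue_markovWord_zero h
  refine ⟨_, ?_, Cusick.cfValue_zero_mem_markovSpectrum h fun n => ?_,
    Cusick.notMem_lagrangeSpectrum hlow hhigh⟩
  · refine hlow.trans' ((Real.sqrt_lt' ?_).2 ?_) <;> norm_num [Cusick.gapLow]
  · obtain rfl | hn := eq_or_ne n 0
    · exact le_rfl
    · exact ((Cusick.cfValue_markovWord_lt h hn).trans hlow).le
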